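/- arXiv:2201.04611 — 7 statements merged into one kernel-verified Lean document; each statement's English description precedes it below -/
import Mathlib

section
/- Aiming inequality (Lemma 4.2 of the paper): Assume (A1) sharpness and (A2) (b)-regularity hold. Then for every x ∈ E with ‖x − x̄‖ < δ and dist(x, X*) ≤ (μ/(2·C_b))^(1/η), every v ∈ g(x), and every x̂ ∈ P_{X*}(x), one has ⟨v, x − x̂⟩ ≥ (μ/2)·dist(x, X*). In particular, if additionally x ∉ X*, then ‖v‖ ≥ μ/2 for every v ∈ g(x). -/
open Metric
open scoped RealInnerProductSpace

/-!
Sharpness and the one-sided regularity estimate at `x` combine, for `y ∈ S` near `x`, into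
`φ (x - y) ≥ μ * infDist x S - C * dist x y ^ (1 + η)`. At distance `r = infDist x S` the radius
condition says exactly that the error `C * r ^ (1 + η)` is at most `μ / 2 * r`: this is the aiming
inequality at a nearest point. The bound on `‖φ‖` needs no nearest point: let `y` run along a
minimizing sequence and pass to the limit. Neither argument uses the inner product, so `⟪v, ·⟫`
may be any continuous linear functional `φ`.
-/

open scoped Topology

section Real

variable {r C μ η : ℝ}

theorem mul_rpow_one_add_le_half_mul (hr : 0 ≤ r) (hC : 0 < C) (hμ : 0 ≤ μ) (hη : 0 < η)
    (h : r ≤ (μ / (2 * C)) ^ (1 / η)) : C * r ^ (1 + η) ≤ μ / 2 * r := by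
  have hpow : r ^ η ≤ μ / (2 * C) := by
    rwa [one_div, Real.le_rpow_inv_iff_of_pos hr (by positivity) hη] at h
  calc
    C * r ^ (1 + η) = C * (r * r ^ η) := by
      rw [Real.rpow_add_of_nonneg hr zero_le_one hη.le, Real.rpow_one]
    _ ≤ C * (r * (μ / (2 * C))) := by gcongr
    _ = μ / 2 * r := by field_simp

end Real

section SeminormedSpace

variable {F : Type*} [SeminormedAddCommGroup F] [NormedSpace ℝ F]
  {S : Set F} {x : F} {φ : StrongDual ℝ F} {μ C : ℝ}

theorem sub_mul_rpow_dist_le_apply_sub {f : F → ℝ} {fstar p : ℝ} {y : F}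
    (hsharp : μ * infDist x S ≤ f x - fstar)
    (hreg : f x + φ (y - x) - fstar ≤ C * ‖y - x‖ ^ p) :
    μ * infDist x S - C * dist x y ^ p ≤ φ (x - y) := by
  rw [← neg_sub x y, map_neg, norm_neg, ← dist_eq_norm] at hreg
  linarith

theorem le_opNorm_mul_infDist {ψ : ℝ → ℝ} {ρ : ℝ} (hψ : ContinuousAt ψ (infDist x S))
    (hS : S.Nonempty) (hρ : infDist x S < ρ)
    (h : ∀ y ∈ S ∩ ball x ρ, ψ (dist x y) ≤ φ (x - y)) :
    ψ (infDist x S) ≤ ‖φ‖ * infDist x S := by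
  have happrox : ∃ᶠ t in 𝓝 (infDist x S), t ∈ dist x '' S :=
    mem_closure_iff_frequently.mp ((isGLB_infDist hS).mem_closure (hS.image _))
  have hbound : ∃ᶠ t in 𝓝 (infDist x S), ψ t ≤ ‖φ‖ * t := by
    refine (happrox.and_eventually (eventually_lt_nhds hρ)).mono ?_
    rintro _ ⟨⟨y, hy, rfl⟩, hyρ⟩
    calc
      ψ (dist x y) ≤ φ (x - y) := h y ⟨hy, mem_ball'.mpr hyρ⟩
      _ ≤ ‖φ (x - y)‖ := Real.le_norm_self _
      _ ≤ ‖φ‖ * dist x y := by simpa only [dist_eq_norm] using φ.le_opNorm (x - y)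
  exact le_of_tendsto_of_tendsto_of_frequently hψ (continuousAt_const.mul continuousAt_id) hbound

theorem half_le_opNorm_of_sub_mul_rpow_dist_le {ρ p : ℝ} (hp : 0 ≤ p) (hS : S.Nonempty)
    (hρ : infDist x S < ρ) (hx : x ∉ closure S)
    (herr : C * infDist x S ^ p ≤ μ / 2 * infDist x S)
    (h : ∀ y ∈ S ∩ ball x ρ, μ * infDist x S - C * dist x y ^ p ≤ φ (x - y)) :
    μ / 2 ≤ ‖φ‖ := by
  have hpos : 0 < infDist x S := (infDist_pos_iff_notMem_closure hS).mp hx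
  have hcont : Continuous fun t : ℝ ↦ μ * infDist x S - C * t ^ p :=
    continuous_const.sub (continuous_const.mul (Real.continuous_rpow_const hp))
  have hlimit : μ * infDist x S - C * infDist x S ^ p ≤ ‖φ‖ * infDist x S :=
    le_opNorm_mul_infDist hcont.continuousAt hS hρ h
  refine le_of_mul_le_mul_right ?_ hpos
  linarith

theorem aiming_inequality_general {f : F → ℝ} {fstar δ η : ℝ} {xbar : F}
    {g : F → Set (StrongDual ℝ F)}
    (hxbar : xbar ∈ S) (hμ : 0 < μ) (hC : 0 < C) (hη : 0 < η)
    (hsharp : ∀ x ∈ ball xbar δ, μ * infDist x S ≤ f x - fstar)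
    (hreg : ∀ x ∈ ball xbar δ, ∀ φ ∈ g x, ∀ y ∈ S ∩ ball xbar (2 * δ),
      f x + φ (y - x) - fstar ≤ C * ‖y - x‖ ^ (1 + η))
    (hx : x ∈ ball xbar δ) (hrad : infDist x S ≤ (μ / (2 * C)) ^ (1 / η)) :
    (∀ φ ∈ g x, ∀ y ∈ S, dist x y = infDist x S → μ / 2 * infDist x S ≤ φ (x - y)) ∧
      (x ∉ closure S → ∀ φ ∈ g x, μ / 2 ≤ ‖φ‖) := by
  have hδ : infDist x S < δ := (infDist_le_dist_of_mem hxbar).trans_lt hx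
  have hball : ball x δ ⊆ ball xbar (2 * δ) :=
    ball_subset_ball' (by linarith [mem_ball.mp hx])
  have hlower : ∀ φ ∈ g x, ∀ y ∈ S ∩ ball x δ,
      μ * infDist x S - C * dist x y ^ (1 + η) ≤ φ (x - y) := fun φ hφ y hy ↦
    sub_mul_rpow_dist_le_apply_sub (hsharp x hx) (hreg x hx φ hφ y ⟨hy.1, hball hy.2⟩)
  have herr : C * infDist x S ^ (1 + η) ≤ μ / 2 * infDist x S :=
    mul_rpow_one_add_le_half_mul infDist_nonneg hC hμ.le hη hrad
  refine ⟨fun φ hφ y hy hxy ↦ ?_, fun hxS φ hφ ↦ ?_⟩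
  · have hy_lower := hlower φ hφ y ⟨hy, mem_ball'.mpr (hxy.trans_lt hδ)⟩
    rw [hxy] at hy_lower
    linarith
  · exact half_le_opNorm_of_sub_mul_rpow_dist_le (by positivity) ⟨xbar, hxbar⟩ hδ hxS herr
      (hlower φ hφ)

end SeminormedSpace

/-- **Aiming inequality** (Lemma 4.2): under sharpness (A1) and (b)-regularity (A2),
negative generalized gradients aim at the solution set. -/
theorem aiming_inequality {d : ℕ}
    (f : EuclideanSpace ℝ (Fin d) → ℝ) (Xs : Set (EuclideanSpace ℝ (Fin d)))
    (fstar : ℝ) (hXne : Xs.Nonempty) (hXcl : IsClosed Xs)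
    (hfX : ∀ y ∈ Xs, f y = fstar)
    (xbar : EuclideanSpace ℝ (Fin d)) (hxbar : xbar ∈ Xs) (δ : ℝ) (hδ : 0 < δ)
    (μ : ℝ) (hμ : 0 < μ)
    (hsharp : ∀ x ∈ ball xbar δ, f x - fstar ≥ μ * infDist x Xs)
    (g : EuclideanSpace ℝ (Fin d) → Set (EuclideanSpace ℝ (Fin d)))
    (hg : ∀ x, (g x).Nonempty)
    (C_b η : ℝ) (hC : 0 < C_b) (hη : 0 < η)
    (hbreg : ∀ x ∈ ball xbar δ, ∀ v ∈ g x, ∀ y ∈ Xs ∩ ball xbar (2 * δ),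
      |f x + ⟪v, y - x⟫ - fstar| ≤ C_b * ‖y - x‖ ^ (1 + η))
    (x : EuclideanSpace ℝ (Fin d))
    (hx1 : ‖x - xbar‖ < δ)
    (hx2 : infDist x Xs ≤ (μ / (2 * C_b)) ^ (1 / η)) :
    (∀ v ∈ g x, ∀ xh ∈ Xs, dist x xh = infDist x Xs →
      ⟪v, x - xh⟫ ≥ μ / 2 * infDist x Xs) ∧
    (x ∉ Xs → ∀ v ∈ g x, ‖v‖ ≥ μ / 2) := by
  simpa only [Set.forall_mem_image, innerSL_apply_apply, innerSL_apply_norm, hXcl.closure_eq] using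
    aiming_inequality_general (g := fun x ↦ innerSL ℝ '' g x) hxbar hμ hC hη hsharp
      (fun x hx ↦ Set.forall_mem_image.mpr fun v hv y hy ↦ (abs_le.mp (hbreg x hx v hv y hy)).2)
      (mem_ball_iff_norm.mpr hx1) hx2
end

section
/- Iterating an algorithmic mapping (Lemma 4.4 of the paper): Fix a point x ∈ E with ‖x − x̄‖ < (1 − ρ)·φ₁/2 and dist(x, X*) < φ₂. Define the sequence z by z_0 = x and z_{i+1} = 𝒜(z_i). Then for every i ≥ 0 one has ‖z_i − x̄‖ < φ₁ and dist(z_i, X*) ≤ ρ^i·dist(x, X*); moreover, for every i ≥ 1 and every ẑ ∈ P_{X*}(z_{i−1}) one has dist(z_i, X*) ≤ ‖z_i − ẑ‖ ≤ ρ^i·dist(x, X*). -/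
open Metric

/-!
The nearest point to `z i` is within `infDist (z i) Xs` of `z i` and within `ρ * infDist (z i) Xs`
of `z (i + 1)`, so the distance to `Xs` contracts by `ρ` and the step has length at most
`(1 + ρ) * infDist (z i) Xs`. As long as the iterates stay in the region where `Alg` is controlled,
the steps are therefore dominated by a geometric sequence, and the orbit never leaves the ball of
radius `(1 + (1 + ρ) / (1 - ρ)) * ‖x - xbar‖ = 2 / (1 - ρ) * ‖x - xbar‖ < φ₁`.
-/

section PseudoMetricSpace

variable {α : Type*} [PseudoMetricSpace α]

/-- The set-valued metric projection `P_S(x)`: the points of `S` at minimal distance from `x`. For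
`S = ∅` it is empty, even though `infDist x ∅ = 0`. -/
def nearestPoints (S : Set α) (x : α) : Set α :=
  {y ∈ S | dist x y = infDist x S}

theorem nearestPoints_nonempty_of_isClosed [ProperSpace α] {S : Set α} (hS : IsClosed S)
    (hne : S.Nonempty) (x : α) : (nearestPoints S x).Nonempty :=
  let ⟨y, hy, hxy⟩ := hS.exists_infDist_eq_dist hne x
  ⟨y, hy, hxy.symm⟩

/-- The algorithmic mapping condition (A3): `A` moves each point near `c` and near `S` to within `ρ`
times its distance to `S` from every one of its nearest points, not just from one of them. -/
def IsAlgorithmicMap (A : α → α) (S : Set α) (c : α) (φ₁ φ₂ ρ : ℝ) : Prop :=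
  ∀ x, dist x c < φ₁ → infDist x S < φ₂ →
    ∀ y ∈ nearestPoints S x, dist (A x) y ≤ ρ * infDist x S

namespace IsAlgorithmicMap

variable {A : α → α} {S : Set α} {c x : α} {φ₁ φ₂ ρ : ℝ}

theorem infDist_apply_le (hA : IsAlgorithmicMap A S c φ₁ φ₂ ρ) (hxc : dist x c < φ₁)
    (hxS : infDist x S < φ₂) (hx : (nearestPoints S x).Nonempty) :
    infDist (A x) S ≤ ρ * infDist x S :=
  let ⟨y, hy⟩ := hx
  (infDist_le_dist_of_mem hy.1).trans (hA x hxc hxS y hy)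

theorem dist_apply_le (hA : IsAlgorithmicMap A S c φ₁ φ₂ ρ) (hxc : dist x c < φ₁)
    (hxS : infDist x S < φ₂) (hx : (nearestPoints S x).Nonempty) :
    dist x (A x) ≤ (1 + ρ) * infDist x S := by
  obtain ⟨y, hy⟩ := hx
  calc
    dist x (A x) ≤ dist x y + dist (A x) y := dist_triangle_right x (A x) y
    _ ≤ infDist x S + ρ * infDist x S := add_le_add hy.2.le (hA x hxc hxS y hy)
    _ = (1 + ρ) * infDist x S := by ring

end IsAlgorithmicMap

theorem dist_le_div_of_forall_lt_dist_le_geometric {z : ℕ → α} {n : ℕ} {C ρ : ℝ} (hC : 0 ≤ C)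
    (hρ₀ : 0 ≤ ρ) (hρ₁ : ρ < 1) (hz : ∀ k < n, dist (z k) (z (k + 1)) ≤ C * ρ ^ k) :
    dist (z 0) (z n) ≤ C / (1 - ρ) :=
  calc
    dist (z 0) (z n) ≤ ∑ k ∈ Finset.range n, C * ρ ^ k := dist_le_range_sum_of_dist_le n (hz _)
    _ = C * ∑ k ∈ Finset.Ico 0 n, ρ ^ k := by rw [Finset.range_eq_Ico, Finset.mul_sum]
    _ ≤ C * (ρ ^ 0 / (1 - ρ)) := by
      gcongr
      exact geom_sum_Ico_le_of_lt_one hρ₀ hρ₁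
    _ = C / (1 - ρ) := by rw [pow_zero, mul_one_div]

theorem dist_lt_of_forall_lt_dist_le_geometric {z : ℕ → α} {c : α} {n : ℕ} {r ρ : ℝ} (hρ₀ : 0 ≤ ρ)
    (hρ₁ : ρ < 1) (hc : dist (z 0) c < (1 - ρ) * r / 2)
    (hz : ∀ k < n, dist (z k) (z (k + 1)) ≤ (1 + ρ) * dist (z 0) c * ρ ^ k) :
    dist (z n) c < r := by
  have h1ρ : 0 < 1 - ρ := sub_pos.2 hρ₁
  calc
    dist (z n) c ≤ dist (z 0) (z n) + dist (z 0) c := dist_triangle_left (z n) c (z 0)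
    _ ≤ (1 + ρ) * dist (z 0) c / (1 - ρ) + dist (z 0) c := by
      gcongr
      exact dist_le_div_of_forall_lt_dist_le_geometric (by positivity) hρ₀ hρ₁ hz
    _ = 2 * dist (z 0) c / (1 - ρ) := by
      field_simp
      ring
    _ < r := by
      rw [div_lt_iff₀ h1ρ]
      linarith

namespace IsAlgorithmicMap

variable {A : α → α} {S : Set α} {c : α} {φ₁ φ₂ ρ : ℝ} {z : ℕ → α}

theorem infDist_orbit_le (hA : IsAlgorithmicMap A S c φ₁ φ₂ ρ)
    (hS : ∀ y, (nearestPoints S y).Nonempty) (hρ₀ : 0 ≤ ρ) (hz : ∀ i, z (i + 1) = A (z i)) {n : ℕ}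
    (hzn : ∀ k < n, dist (z k) c < φ₁ ∧ infDist (z k) S < φ₂) :
    infDist (z n) S ≤ ρ ^ n * infDist (z 0) S :=
  le_geom (u := fun i => infDist (z i) S) hρ₀ n fun k hk =>
    hz k ▸ hA.infDist_apply_le (hzn k hk).1 (hzn k hk).2 (hS (z k))

theorem dist_orbit_succ_le (hA : IsAlgorithmicMap A S c φ₁ φ₂ ρ)
    (hS : ∀ y, (nearestPoints S y).Nonempty) (hρ₀ : 0 ≤ ρ) (hz : ∀ i, z (i + 1) = A (z i)) {n : ℕ}
    (hzn : ∀ k ≤ n, dist (z k) c < φ₁ ∧ infDist (z k) S < φ₂) :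
    dist (z n) (z (n + 1)) ≤ (1 + ρ) * infDist (z 0) S * ρ ^ n :=
  calc
    dist (z n) (z (n + 1)) ≤ (1 + ρ) * infDist (z n) S :=
      hz n ▸ hA.dist_apply_le (hzn n le_rfl).1 (hzn n le_rfl).2 (hS (z n))
    _ ≤ (1 + ρ) * (ρ ^ n * infDist (z 0) S) := by
      gcongr
      exact hA.infDist_orbit_le hS hρ₀ hz fun k hk => hzn k hk.le
    _ = (1 + ρ) * infDist (z 0) S * ρ ^ n := by ring

theorem orbit_dist_lt_and_infDist_lt (hA : IsAlgorithmicMap A S c φ₁ φ₂ ρ) (hc : c ∈ S)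
    (hS : ∀ y, (nearestPoints S y).Nonempty) (hρ₀ : 0 ≤ ρ) (hρ₁ : ρ < 1)
    (hz₁ : dist (z 0) c < (1 - ρ) * φ₁ / 2) (hz₂ : infDist (z 0) S < φ₂)
    (hz : ∀ i, z (i + 1) = A (z i)) (i : ℕ) :
    dist (z i) c < φ₁ ∧ infDist (z i) S < φ₂ := by
  induction i using Nat.strong_induction_on with
  | h n ih =>
    constructor
    · refine dist_lt_of_forall_lt_dist_le_geometric hρ₀ hρ₁ hz₁ fun k hk => ?_
      calc
        dist (z k) (z (k + 1)) ≤ (1 + ρ) * infDist (z 0) S * ρ ^ k :=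
          hA.dist_orbit_succ_le hS hρ₀ hz fun j hj => ih j (hj.trans_lt hk)
        _ ≤ (1 + ρ) * dist (z 0) c * ρ ^ k := by
          gcongr
          exact infDist_le_dist_of_mem hc
    · calc
        infDist (z n) S ≤ ρ ^ n * infDist (z 0) S := hA.infDist_orbit_le hS hρ₀ hz ih
        _ ≤ infDist (z 0) S :=
          mul_le_of_le_one_left infDist_nonneg (pow_le_one₀ hρ₀ hρ₁.le)
        _ < φ₂ := hz₂

end IsAlgorithmicMap

theorem iterate_algorithmic_mapping_general {A : α → α} {S : Set α} {c : α} {φ₁ φ₂ ρ : ℝ}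
    {z : ℕ → α} (hA : IsAlgorithmicMap A S c φ₁ φ₂ ρ) (hc : c ∈ S)
    (hS : ∀ y, (nearestPoints S y).Nonempty) (hρ₀ : 0 ≤ ρ) (hρ₁ : ρ < 1)
    (hz₁ : dist (z 0) c < (1 - ρ) * φ₁ / 2) (hz₂ : infDist (z 0) S < φ₂)
    (hz : ∀ i, z (i + 1) = A (z i)) :
    (∀ i, dist (z i) c < φ₁ ∧ infDist (z i) S ≤ ρ ^ i * infDist (z 0) S) ∧
    (∀ i, ∀ y ∈ nearestPoints S (z i), infDist (z (i + 1)) S ≤ dist (z (i + 1)) y ∧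
      dist (z (i + 1)) y ≤ ρ ^ (i + 1) * infDist (z 0) S) := by
  have hregion := hA.orbit_dist_lt_and_infDist_lt hc hS hρ₀ hρ₁ hz₁ hz₂ hz
  have hrate (i : ℕ) : infDist (z i) S ≤ ρ ^ i * infDist (z 0) S :=
    hA.infDist_orbit_le hS hρ₀ hz fun k _ => hregion k
  refine ⟨fun i => ⟨(hregion i).1, hrate i⟩, fun i y hy => ⟨infDist_le_dist_of_mem hy.1, ?_⟩⟩
  calc
    dist (z (i + 1)) y ≤ ρ * infDist (z i) S := hz i ▸ hA (z i) (hregion i).1 (hregion i).2 y hy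
    _ ≤ ρ * (ρ ^ i * infDist (z 0) S) := by
      gcongr
      exact hrate i
    _ = ρ ^ (i + 1) * infDist (z 0) S := by ring

end PseudoMetricSpace

/-- **Iterating an algorithmic mapping** (Lemma 4.4): iterating an algorithmic mapping
from a suitable initialization keeps the iterates near `xbar` and drives them to `Xs`
at a linear rate. -/
theorem iterate_algorithmic_mapping {d : ℕ}
    (Xs : Set (EuclideanSpace ℝ (Fin d))) (hXne : Xs.Nonempty) (hXcl : IsClosed Xs)
    (xbar : EuclideanSpace ℝ (Fin d)) (hxbar : xbar ∈ Xs)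
    (Alg : EuclideanSpace ℝ (Fin d) → EuclideanSpace ℝ (Fin d))
    (φ₁ φ₂ ρ : ℝ) (hφ₂ : 0 < φ₂) (hφ : φ₂ ≤ φ₁) (hρ0 : 0 < ρ) (hρ1 : ρ < 1)
    (hAlg : ∀ x, ‖x - xbar‖ < φ₁ → infDist x Xs < φ₂ →
      ∀ xh ∈ Xs, dist x xh = infDist x Xs → ‖Alg x - xh‖ ≤ ρ * infDist x Xs)
    (x : EuclideanSpace ℝ (Fin d))
    (hx1 : ‖x - xbar‖ < (1 - ρ) * φ₁ / 2) (hx2 : infDist x Xs < φ₂)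
    (z : ℕ → EuclideanSpace ℝ (Fin d)) (hz0 : z 0 = x)
    (hz : ∀ i, z (i + 1) = Alg (z i)) :
    (∀ i, ‖z i - xbar‖ < φ₁ ∧ infDist (z i) Xs ≤ ρ ^ i * infDist x Xs) ∧
    (∀ i, 1 ≤ i → ∀ zh ∈ Xs, dist (z (i - 1)) zh = infDist (z (i - 1)) Xs →
      infDist (z i) Xs ≤ ‖z i - zh‖ ∧ ‖z i - zh‖ ≤ ρ ^ i * infDist x Xs) := by
  subst hz0
  simp only [← dist_eq_norm] at hAlg hx1 ⊢
  have h := iterate_algorithmic_mapping_general (fun y hy₁ hy₂ p hp => hAlg y hy₁ hy₂ p hp.1 hp.2)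
    hxbar (nearestPoints_nonempty_of_isClosed hXcl hXne) hρ0.le hρ1 hx1 hx2 hz
  exact ⟨h.1, fun | i + 1, _, zh, hzh, hd => h.2 i zh ⟨hzh, hd⟩⟩
end

section
/- One-step improvement of the Polyak subgradient step (Lemma 4.5 of the paper): Assume (A1) and (A2) hold and let s : E → E be a selection with s(x) ∈ g(x) for all x. Define 𝒜(x) = x − ((f(x) − f*)/‖s(x)‖²)·s(x) if s(x) ≠ 0, and 𝒜(x) = x otherwise. Then for every x ∈ E with ‖x − x̄‖ < δ and dist(x, X*) < (μ/(4·C_b))^(1/η), and every x̂ ∈ P_{X*}(x), one has ‖𝒜(x) − x̂‖² ≤ (1 − μ²/(4L²))·‖x − x̂‖². Consequently 𝒜 satisfies the algorithmic-mapping property (A3) with φ₁ = δ, φ₂ = (μ/(4·C_b))^(1/η), and ρ = sqrt(1 − μ²/(4L²)). -/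
open Metric
open scoped RealInnerProductSpace

/-!
Put `gap = f x - f*`. Expanding the square, the Polyak step along `v` decreases the squared
distance to `y` by `gap * (2 * ⟪v, x - y⟫ - gap) / ‖v‖ ^ 2`. Sharpness bounds `gap` below by
`μ * ‖x - y‖` when `y` is a nearest solution, and close to the solution set the regularity error
is at most a quarter of that bound, so `2 * ⟪v, x - y⟫ - gap` is at least half of it and the
decrease is at least `μ ^ 2 / (2 * ‖v‖ ^ 2) * ‖x - y‖ ^ 2`.
-/

theorem mul_rpow_one_add_le_mul {C η a r : ℝ} (hC : 0 < C) (hη : 0 < η) (ha : 0 ≤ a) (hr : 0 ≤ r)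
    (h : r ≤ (a / C) ^ (1 / η)) : C * r ^ (1 + η) ≤ a * r := by
  have hpow : r ^ η ≤ a / C := by
    rwa [one_div, Real.le_rpow_inv_iff_of_pos hr (by positivity) hη] at h
  calc C * r ^ (1 + η) = C * r ^ η * r := by
        rw [Real.rpow_add' hr (by positivity), Real.rpow_one]; ring
    _ ≤ C * (a / C) * r := by gcongr
    _ = a * r := by rw [mul_div_cancel₀ a hC.ne']

theorem le_sqrt_mul_of_sq_le_mul_sq {a b c : ℝ} (hb : 0 ≤ b) (h : a ^ 2 ≤ c * b ^ 2) :
    a ≤ √c * b :=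
  calc a ≤ √(c * b ^ 2) := Real.le_sqrt_of_sq_le h
    _ = √c * b := by rw [Real.sqrt_mul' c (sq_nonneg b), Real.sqrt_sq hb]

theorem mem_ball_two_mul_of_dist_eq_infDist {α : Type*} [PseudoMetricSpace α] {X : Set α}
    {x y z : α} {δ : ℝ} (hz : z ∈ X) (hx : x ∈ ball z δ) (hy : dist x y = infDist x X) :
    y ∈ ball z (2 * δ) := by
  have hxy : dist x y ≤ dist x z := hy ▸ infDist_le_dist_of_mem hz
  calc dist y z ≤ dist x y + dist x z := dist_triangle_left y z x
    _ < 2 * δ := by linarith [mem_ball.1 hx]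

section PolyakStep

variable {E : Type*} [NormedAddCommGroup E] [InnerProductSpace ℝ E] {gap : ℝ} {v x y : E}

/-- The Polyak step from `x` along the (sub)gradient `v`, where `gap` is the excess of the current
function value over the optimal one. Since `gap / 0 = 0`, the step is the identity when `v = 0`. -/
noncomputable def polyakStep (gap : ℝ) (v x : E) : E := x - (gap / ‖v‖ ^ 2) • v

theorem eq_polyakStep {z : E} (hne : v ≠ 0 → z = x - (gap / ‖v‖ ^ 2) • v) (hzero : v = 0 → z = x) :
    z = polyakStep gap v x := by
  rcases eq_or_ne v 0 with rfl | hv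
  · simpa [polyakStep] using hzero rfl
  · exact hne hv

theorem norm_polyakStep_sub_sq :
    ‖polyakStep gap v x - y‖ ^ 2 =
      ‖x - y‖ ^ 2 - gap * (2 * ⟪v, x - y⟫ - gap) / ‖v‖ ^ 2 := by
  rcases eq_or_ne v 0 with rfl | hv
  · simp [polyakStep]
  · rw [polyakStep, sub_right_comm, norm_sub_sq_real, real_inner_smul_right, norm_smul, mul_pow,
      Real.norm_eq_abs, sq_abs, real_inner_comm]
    field_simp
    ring

theorem norm_polyakStep_sub_sq_le {μ ε L : ℝ} (hμ : 0 ≤ μ) (hε : ε ≤ 1 / 2)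
    (hsharp : μ * ‖x - y‖ ≤ gap) (hreg : gap - ⟪v, x - y⟫ ≤ ε * μ * ‖x - y‖) (hv : ‖v‖ ≤ L) :
    ‖polyakStep gap v x - y‖ ^ 2 ≤ (1 - (1 - 2 * ε) * μ ^ 2 / L ^ 2) * ‖x - y‖ ^ 2 := by
  have hε' : 0 ≤ 1 - 2 * ε := by linarith
  have hμD : 0 ≤ μ * ‖x - y‖ := by positivity
  have hprod : (1 - 2 * ε) * (μ * ‖x - y‖) ^ 2 ≤ gap * (2 * ⟪v, x - y⟫ - gap) :=
    calc (1 - 2 * ε) * (μ * ‖x - y‖) ^ 2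
        = μ * ‖x - y‖ * ((1 - 2 * ε) * (μ * ‖x - y‖)) := by ring
      _ ≤ gap * (2 * ⟪v, x - y⟫ - gap) :=
          mul_le_mul hsharp (by linarith) (by positivity) (hμD.trans hsharp)
  have hdecrease : (1 - 2 * ε) * (μ * ‖x - y‖) ^ 2 / L ^ 2 ≤
      gap * (2 * ⟪v, x - y⟫ - gap) / ‖v‖ ^ 2 := by
    rcases eq_or_ne v 0 with rfl | hv0
    · have hnonpos : (1 - 2 * ε) * (μ * ‖x - y‖) ^ 2 ≤ 0 := by
        rw [inner_zero_left] at hprod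
        linarith [mul_self_nonneg gap]
      simpa using div_nonpos_of_nonpos_of_nonneg hnonpos (sq_nonneg L)
    · gcongr
      exact hprod.trans' (by positivity)
  calc ‖polyakStep gap v x - y‖ ^ 2
      = ‖x - y‖ ^ 2 - gap * (2 * ⟪v, x - y⟫ - gap) / ‖v‖ ^ 2 := norm_polyakStep_sub_sq
    _ ≤ ‖x - y‖ ^ 2 - (1 - 2 * ε) * (μ * ‖x - y‖) ^ 2 / L ^ 2 := by gcongr
    _ = (1 - (1 - 2 * ε) * μ ^ 2 / L ^ 2) * ‖x - y‖ ^ 2 := by ring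

theorem polyak_one_step_improvement_general {f : E → ℝ} {X : Set E} {fstar δ μ C η L : ℝ}
    {xbar : E} {s : E → E} (hxbar : xbar ∈ X) (hμ : 0 < μ) (hC : 0 < C) (hη : 0 < η)
    (hsharp : ∀ x ∈ ball xbar δ, μ * infDist x X ≤ f x - fstar)
    (hreg : ∀ x ∈ ball xbar δ, ∀ y ∈ X ∩ ball xbar (2 * δ),
      f x + ⟪s x, y - x⟫ - fstar ≤ C * ‖y - x‖ ^ (1 + η))
    (hL : ∀ x ∈ ball xbar δ, ‖s x‖ ≤ L) (hx : x ∈ ball xbar δ)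
    (hdist : infDist x X < (μ / (4 * C)) ^ (1 / η)) (hy : y ∈ X) (hxy : dist x y = infDist x X) :
    ‖polyakStep (f x - fstar) (s x) x - y‖ ^ 2 ≤ (1 - μ ^ 2 / (2 * L ^ 2)) * ‖x - y‖ ^ 2 ∧
      ‖polyakStep (f x - fstar) (s x) x - y‖ ≤ √(1 - μ ^ 2 / (2 * L ^ 2)) * infDist x X := by
  have hgap : μ * ‖x - y‖ ≤ f x - fstar := by
    simpa only [← hxy, dist_eq_norm] using hsharp x hx
  have herror : C * ‖x - y‖ ^ (1 + η) ≤ 1 / 4 * μ * ‖x - y‖ := by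
    refine mul_rpow_one_add_le_mul hC hη (by positivity) (norm_nonneg _) ?_
    have hratio : 1 / 4 * μ / C = μ / (4 * C) := by ring
    rw [← dist_eq_norm, hxy, hratio]
    exact hdist.le
  have hinner : f x - fstar - ⟪s x, x - y⟫ ≤ 1 / 4 * μ * ‖x - y‖ := by
    have hreg_y := hreg x hx y ⟨hy, mem_ball_two_mul_of_dist_eq_infDist hxbar hx hxy⟩
    rw [← neg_sub x y, inner_neg_right, norm_neg] at hreg_y
    linarith
  have hsq : ‖polyakStep (f x - fstar) (s x) x - y‖ ^ 2 ≤
      (1 - μ ^ 2 / (2 * L ^ 2)) * ‖x - y‖ ^ 2 := by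
    convert norm_polyakStep_sub_sq_le hμ.le (by norm_num) hgap hinner (hL x hx) using 3
    ring
  rw [← hxy, dist_eq_norm]
  exact ⟨hsq, le_sqrt_mul_of_sq_le_mul_sq (norm_nonneg _) hsq⟩

end PolyakStep

/-- **One-step improvement of the Polyak subgradient step** (Lemma 4.5): the Polyak
step contracts the distance to each nearest point of the solution set; consequently the
Polyak step map is an algorithmic mapping with parameters
`φ₁ = δ`, `φ₂ = (μ/(4 C_b))^(1/η)`, `ρ = sqrt (1 - μ²/(4 L²))`. -/
theorem polyak_one_step_improvement {d : ℕ}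
    (f : EuclideanSpace ℝ (Fin d) → ℝ) (Xs : Set (EuclideanSpace ℝ (Fin d)))
    (fstar : ℝ) (hXne : Xs.Nonempty) (hXcl : IsClosed Xs)
    (hfX : ∀ y ∈ Xs, f y = fstar)
    (xbar : EuclideanSpace ℝ (Fin d)) (hxbar : xbar ∈ Xs) (δ : ℝ) (hδ : 0 < δ)
    (μ : ℝ) (hμ : 0 < μ)
    (hsharp : ∀ x ∈ ball xbar δ, f x - fstar ≥ μ * infDist x Xs)
    (g : EuclideanSpace ℝ (Fin d) → Set (EuclideanSpace ℝ (Fin d)))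
    (hg : ∀ x, (g x).Nonempty)
    (C_b η : ℝ) (hC : 0 < C_b) (hη : 0 < η)
    (hbreg : ∀ x ∈ ball xbar δ, ∀ v ∈ g x, ∀ y ∈ Xs ∩ ball xbar (2 * δ),
      |f x + ⟪v, y - x⟫ - fstar| ≤ C_b * ‖y - x‖ ^ (1 + η))
    (L : ℝ) (hL : 0 < L)
    (hgL : ∀ x ∈ ball xbar δ, ∀ v ∈ g x, ‖v‖ ≤ L)
    (s : EuclideanSpace ℝ (Fin d) → EuclideanSpace ℝ (Fin d))
    (hs : ∀ x, s x ∈ g x)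
    (Alg : EuclideanSpace ℝ (Fin d) → EuclideanSpace ℝ (Fin d))
    (hAlg : ∀ x, (s x ≠ 0 → Alg x = x - ((f x - fstar) / ‖s x‖ ^ 2) • s x) ∧
      (s x = 0 → Alg x = x)) :
    (∀ x, ‖x - xbar‖ < δ → infDist x Xs < (μ / (4 * C_b)) ^ (1 / η) →
      ∀ xh ∈ Xs, dist x xh = infDist x Xs →
        ‖Alg x - xh‖ ^ 2 ≤ (1 - μ ^ 2 / (4 * L ^ 2)) * ‖x - xh‖ ^ 2) ∧
    (∀ x, ‖x - xbar‖ < δ → infDist x Xs < (μ / (4 * C_b)) ^ (1 / η) →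
      ∀ xh ∈ Xs, dist x xh = infDist x Xs →
        ‖Alg x - xh‖ ≤ Real.sqrt (1 - μ ^ 2 / (4 * L ^ 2)) * infDist x Xs) := by
  obtain rfl : Alg = fun x ↦ polyakStep (f x - fstar) (s x) x :=
    funext fun x ↦ eq_polyakStep (hAlg x).1 (hAlg x).2
  have hstep {x xh} (hx : ‖x - xbar‖ < δ) :=
    polyak_one_step_improvement_general (x := x) (y := xh) hxbar hμ hC hη hsharp
      (fun x hx y hy ↦ (le_abs_self _).trans (hbreg x hx (s x) (hs x) y hy))
      (fun x hx ↦ hgL x hx (s x) (hs x)) (mem_ball_iff_norm.2 hx)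
  have hrate : 1 - μ ^ 2 / (2 * L ^ 2) ≤ 1 - μ ^ 2 / (4 * L ^ 2) := by
    gcongr
    norm_num
  exact ⟨fun x hx hd xh hxh hp ↦ (hstep hx hd hxh hp).1.trans (by gcongr),
    fun x hx hd xh hxh hp ↦ (hstep hx hd hxh hp).2.trans
      (mul_le_mul_of_nonneg_right (Real.sqrt_le_sqrt hrate) infDist_nonneg)⟩
end

section
/- Function-gap halving for a fallback algorithm (Corollary 4.7 of the paper): Let 𝒜 be an algorithmic mapping with radii 0 < φ₂ ≤ φ₁ and factor ρ ∈ (0,1). Assume f(x) − f* ≥ μ·dist(x, X*) for all x ∈ B_{φ₁}(x̄) with μ > 0, that f is L-Lipschitz on the open ball B_{2φ₁}(x̄) with L ≥ μ, and set κ = L/μ. Fix x ∈ E with ‖x − x̄‖ < (1 − ρ)·φ₁/2, dist(x, X*) < φ₂, and f(x) > f*. Define z_0 = x and z_{i+1} = 𝒜(z_i). Then there exists an index i ≤ ⌈log(2κ)/(1 − ρ)⌉ such that f(z_i) − f* ≤ (1/2)·(f(x) − f*). -/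
open Metric

/-!
Write `d y` for the distance from `y` to the solution set `s`. One step sends `d` to at most `ρ * d`
and moves the point by at most `(1 + ρ) * d`, so `(1 - ρ) * dist y c + (1 + ρ) * d y` does not
increase along the iteration, which keeps the orbit in the ball where the hypotheses apply.
Sharpness at the start and Lipschitz continuity at the end turn `d (z n) ≤ ρ ^ n * d x` into
`f (z n) - f* ≤ κ * ρ ^ n * (f x - f*)`, and `ρ ^ n ≤ exp (-(1 - ρ) * n)`.
-/

theorem pow_le_inv_of_log_div_one_sub_le {ρ a : ℝ} {n : ℕ} (hρ₀ : 0 ≤ ρ) (hρ₁ : ρ < 1)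
    (ha : 0 < a) (hn : Real.log a / (1 - ρ) ≤ n) : ρ ^ n ≤ a⁻¹ := by
  have hlog : Real.log a ≤ n * (1 - ρ) := (div_le_iff₀ (sub_pos.2 hρ₁)).1 hn
  calc
    ρ ^ n = (1 - (1 - ρ)) ^ n := by rw [sub_sub_cancel]
    _ ≤ Real.exp (-(1 - ρ)) ^ n := by
      gcongr
      · rwa [sub_sub_cancel]
      · exact Real.one_sub_le_exp_neg _
    _ = Real.exp (-(n * (1 - ρ))) := by rw [← Real.exp_nat_mul, mul_neg]
    _ ≤ Real.exp (-Real.log a) := by gcongr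
    _ = a⁻¹ := by rw [Real.exp_neg, Real.exp_log ha]

section PseudoMetricSpace

variable {E : Type*} [PseudoMetricSpace E]

theorem dist_le_mul_infDist_of_lipschitzOnWith {F : Type*} [PseudoMetricSpace F] {f : E → F}
    {s : Set E} {x : E} {v : F} {r : ℝ} {K : NNReal} (hf : LipschitzOnWith K f (ball x r))
    (hne : s.Nonempty) (hfs : ∀ y ∈ s, f y = v) (hr : infDist x s < r) :
    dist (f x) v ≤ K * infDist x s := by
  have hlim : Filter.Tendsto (fun ε : ℝ ↦ K * ε) (nhdsWithin (infDist x s) (Set.Ioi (infDist x s)))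
      (nhds (K * infDist x s)) :=
    ((continuous_const_mul (K : ℝ)).tendsto _).mono_left nhdsWithin_le_nhds
  refine ge_of_tendsto hlim ?_
  filter_upwards [Ioo_mem_nhdsGT hr] with ε ⟨hε, hεr⟩
  obtain ⟨p, hp, hxp⟩ := (infDist_lt_iff hne).1 hε
  have hx : x ∈ ball x r := mem_ball_self (infDist_nonneg.trans_lt hr)
  have hpr : p ∈ ball x r := mem_ball'.2 (hxp.trans hεr)
  calc
    dist (f x) v = dist (f x) (f p) := by rw [hfs p hp]
    _ ≤ K * dist x p := hf.dist_le_mul x hx p hpr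
    _ ≤ K * ε := by gcongr

/-- Algorithmic mappings: on `U`, the map `A` contracts the distance to `s` by the factor `ρ` and
displaces points by at most `σ` times that distance. Condition (A3) of the paper is encoded through
these two consequences, with `σ = 1 + ρ`, so that no nearest point needs to exist. -/
structure IsAlgorithmicMapping (A : E → E) (s U : Set E) (ρ σ : ℝ) : Prop where
  infDist_map_le : ∀ ⦃x⦄, x ∈ U → infDist (A x) s ≤ ρ * infDist x s
  dist_map_le : ∀ ⦃x⦄, x ∈ U → dist (A x) x ≤ σ * infDist x s

/-- The points near `s` from which an algorithmic mapping never leaves `ball c r`: each remaining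
step is at most `σ` times the current distance to `s`, so a geometric series bounds the total
displacement by `σ * infDist x s / (1 - ρ)`. The inequality is stated with `1 - ρ` cleared. -/
def trappingRegion (s : Set E) (c : E) (r δ ρ σ : ℝ) : Set E :=
  {x | (1 - ρ) * dist x c + σ * infDist x s < (1 - ρ) * r ∧ infDist x s < δ}

variable {A : E → E} {s U V : Set E} {c x : E} {r δ ρ σ : ℝ}

theorem trappingRegion_subset (hρ : ρ < 1) (hσ : 0 ≤ σ) :
    trappingRegion s c r δ ρ σ ⊆ ball c r ∩ {x | infDist x s < δ} := by
  intro x ⟨hx, hδ⟩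
  refine ⟨mem_ball.2 (lt_of_mul_lt_mul_left ?_ (sub_pos.2 hρ).le), hδ⟩
  exact (le_add_of_nonneg_right (mul_nonneg hσ infDist_nonneg)).trans_lt hx

theorem mem_trappingRegion_of_dist_lt (hρ : 0 ≤ 1 + ρ) (hc : c ∈ s)
    (hx : dist x c < (1 - ρ) * r / 2) (hδ : infDist x s < δ) :
    x ∈ trappingRegion s c r δ ρ (1 + ρ) := by
  refine ⟨?_, hδ⟩
  calc
    (1 - ρ) * dist x c + (1 + ρ) * infDist x s ≤ (1 - ρ) * dist x c + (1 + ρ) * dist x c := by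
      gcongr
      exact infDist_le_dist_of_mem hc
    _ = 2 * dist x c := by ring
    _ < (1 - ρ) * r := by linarith

namespace IsAlgorithmicMapping

theorem of_dist_nearest_le [ProperSpace E] (hs : IsClosed s) (hne : s.Nonempty)
    (h : ∀ x ∈ U, ∀ p ∈ s, dist x p = infDist x s → dist (A x) p ≤ ρ * infDist x s) :
    IsAlgorithmicMapping A s U ρ (1 + ρ) where
  infDist_map_le x hx := by
    obtain ⟨p, hp, hxp⟩ := hs.exists_infDist_eq_dist hne x
    exact (infDist_le_dist_of_mem hp).trans (h x hx p hp hxp.symm)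
  dist_map_le x hx := by
    obtain ⟨p, hp, hxp⟩ := hs.exists_infDist_eq_dist hne x
    calc
      dist (A x) x ≤ dist (A x) p + dist x p := dist_triangle_right _ _ _
      _ ≤ ρ * infDist x s + infDist x s := add_le_add (h x hx p hp hxp.symm) hxp.ge
      _ = (1 + ρ) * infDist x s := by ring

theorem mono (hA : IsAlgorithmicMapping A s U ρ σ) (hVU : V ⊆ U) :
    IsAlgorithmicMapping A s V ρ σ :=
  ⟨fun _ hx ↦ hA.infDist_map_le (hVU hx), fun _ hx ↦ hA.dist_map_le (hVU hx)⟩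

theorem mul_dist_map_add_mul_infDist_map_le (hA : IsAlgorithmicMapping A s U ρ σ) (hρ : ρ ≤ 1)
    (hσ : 0 ≤ σ) (hx : x ∈ U) (c : E) :
    (1 - ρ) * dist (A x) c + σ * infDist (A x) s ≤ (1 - ρ) * dist x c + σ * infDist x s := by
  have hdist : dist (A x) c ≤ σ * infDist x s + dist x c :=
    (dist_triangle _ x _).trans (by gcongr; exact hA.dist_map_le hx)
  calc
    (1 - ρ) * dist (A x) c + σ * infDist (A x) s
        ≤ (1 - ρ) * (σ * infDist x s + dist x c) + σ * (ρ * infDist x s) :=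
      add_le_add (mul_le_mul_of_nonneg_left hdist (sub_nonneg.2 hρ))
        (mul_le_mul_of_nonneg_left (hA.infDist_map_le hx) hσ)
    _ = (1 - ρ) * dist x c + σ * infDist x s := by ring

theorem mapsTo_trappingRegion
    (hA : IsAlgorithmicMapping A s (ball c r ∩ {x | infDist x s < δ}) ρ σ) (hρ : ρ < 1)
    (hσ : 0 ≤ σ) :
    Set.MapsTo A (trappingRegion s c r δ ρ σ) (trappingRegion s c r δ ρ σ) := by
  intro x hx
  have hxU := trappingRegion_subset hρ hσ hx
  exact ⟨(hA.mul_dist_map_add_mul_infDist_map_le hρ.le hσ hxU c).trans_lt hx.1,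
    ((hA.infDist_map_le hxU).trans (mul_le_of_le_one_left infDist_nonneg hρ.le)).trans_lt hx.2⟩

theorem infDist_iterate_le (hA : IsAlgorithmicMapping A s U ρ σ) (hρ : 0 ≤ ρ)
    (hU : Set.MapsTo A U U) (hx : x ∈ U) (n : ℕ) :
    infDist (A^[n] x) s ≤ ρ ^ n * infDist x s := by
  induction n with
  | zero => simp
  | succ n ih =>
    calc
      infDist (A^[n + 1] x) s = infDist (A (A^[n] x)) s := by rw [Function.iterate_succ_apply']
      _ ≤ ρ * infDist (A^[n] x) s := hA.infDist_map_le (hU.iterate n hx)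
      _ ≤ ρ * (ρ ^ n * infDist x s) := by gcongr
      _ = ρ ^ (n + 1) * infDist x s := by ring

theorem sub_iterate_le_pow_mul_infDist {f : E → ℝ} {v : ℝ} {K : NNReal}
    (hA : IsAlgorithmicMapping A s (ball c r ∩ {x | infDist x s < δ}) ρ σ)
    (hρ₀ : 0 ≤ ρ) (hρ₁ : ρ < 1) (hσ : 0 ≤ σ) (hc : c ∈ s) (hfs : ∀ y ∈ s, f y = v)
    (hf : LipschitzOnWith K f (ball c (2 * r))) (hx : x ∈ trappingRegion s c r δ ρ σ) (n : ℕ) :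
    f (A^[n] x) - v ≤ K * (ρ ^ n * infDist x s) := by
  have htrap := hA.mapsTo_trappingRegion hρ₁ hσ
  have hsub := trappingRegion_subset (s := s) (c := c) (r := r) (δ := δ) hρ₁ hσ
  have hball : A^[n] x ∈ ball c r := (hsub (htrap.iterate n hx)).1
  have hf' : LipschitzOnWith K f (ball (A^[n] x) r) :=
    hf.mono (ball_subset_ball' (by linarith [mem_ball.1 hball]))
  have hnear : infDist (A^[n] x) s < r := (infDist_le_dist_of_mem hc).trans_lt hball
  calc
    f (A^[n] x) - v ≤ dist (f (A^[n] x)) v := le_abs_self _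
    _ ≤ K * infDist (A^[n] x) s := dist_le_mul_infDist_of_lipschitzOnWith hf' ⟨c, hc⟩ hfs hnear
    _ ≤ K * (ρ ^ n * infDist x s) := by
      gcongr
      exact (hA.mono hsub).infDist_iterate_le hρ₀ htrap hx n

end IsAlgorithmicMapping

theorem fallback_halves_gap_general {f : E → ℝ} {v μ q : ℝ} {K : NNReal} {n : ℕ}
    (hA : IsAlgorithmicMapping A s (ball c r ∩ {x | infDist x s < δ}) ρ σ)
    (hρ₀ : 0 ≤ ρ) (hρ₁ : ρ < 1) (hσ : 0 ≤ σ) (hc : c ∈ s) (hfs : ∀ y ∈ s, f y = v)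
    (hμ : 0 < μ) (hsharp : μ * infDist x s ≤ f x - v) (hK : 0 < K)
    (hf : LipschitzOnWith K f (ball c (2 * r))) (hx : x ∈ trappingRegion s c r δ ρ σ)
    (hq : 0 < q) (hn : Real.log (q * (K / μ)) / (1 - ρ) ≤ n) :
    f (A^[n] x) - v ≤ (f x - v) / q := by
  have hpow : ρ ^ n ≤ (q * (K / μ))⁻¹ :=
    pow_le_inv_of_log_div_one_sub_le hρ₀ hρ₁ (by positivity) hn
  calc
    f (A^[n] x) - v ≤ K * (ρ ^ n * infDist x s) :=
      hA.sub_iterate_le_pow_mul_infDist hρ₀ hρ₁ hσ hc hfs hf hx n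
    _ ≤ K * ((q * (K / μ))⁻¹ * infDist x s) := by gcongr; exact infDist_nonneg
    _ = μ * infDist x s / q := by field_simp
    _ ≤ (f x - v) / q := by gcongr

end PseudoMetricSpace

/-- **Function-gap halving for a fallback algorithm** (Corollary 4.7): iterating an
algorithmic mapping halves the function gap within `⌈log(2κ)/(1-ρ)⌉` iterations. -/
theorem fallback_halves_gap {d : ℕ}
    (f : EuclideanSpace ℝ (Fin d) → ℝ) (Xs : Set (EuclideanSpace ℝ (Fin d)))
    (fstar : ℝ) (hXne : Xs.Nonempty) (hXcl : IsClosed Xs)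
    (hfX : ∀ y ∈ Xs, f y = fstar)
    (xbar : EuclideanSpace ℝ (Fin d)) (hxbar : xbar ∈ Xs)
    (Alg : EuclideanSpace ℝ (Fin d) → EuclideanSpace ℝ (Fin d))
    (φ₁ φ₂ ρ : ℝ) (hφ₂ : 0 < φ₂) (hφ : φ₂ ≤ φ₁) (hρ0 : 0 < ρ) (hρ1 : ρ < 1)
    (hAlg : ∀ x, ‖x - xbar‖ < φ₁ → infDist x Xs < φ₂ →
      ∀ xh ∈ Xs, dist x xh = infDist x Xs → ‖Alg x - xh‖ ≤ ρ * infDist x Xs)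
    (μ L : ℝ) (hμ : 0 < μ) (hLμ : μ ≤ L)
    (hsharp : ∀ x ∈ ball xbar φ₁, f x - fstar ≥ μ * infDist x Xs)
    (hLip : ∀ a ∈ ball xbar (2 * φ₁), ∀ b ∈ ball xbar (2 * φ₁),
      |f a - f b| ≤ L * ‖a - b‖)
    (x : EuclideanSpace ℝ (Fin d))
    (hx1 : ‖x - xbar‖ < (1 - ρ) * φ₁ / 2) (hx2 : infDist x Xs < φ₂)
    (hx3 : f x > fstar)
    (z : ℕ → EuclideanSpace ℝ (Fin d)) (hz0 : z 0 = x)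
    (hz : ∀ i, z (i + 1) = Alg (z i)) :
    ∃ i : ℕ, i ≤ ⌈Real.log (2 * (L / μ)) / (1 - ρ)⌉₊ ∧
      f (z i) - fstar ≤ (f x - fstar) / 2 := by
  simp only [← dist_eq_norm] at hAlg hLip hx1
  lift L to NNReal using hμ.le.trans hLμ
  have hA : IsAlgorithmicMapping Alg Xs (ball xbar φ₁ ∩ {y | infDist y Xs < φ₂}) ρ (1 + ρ) :=
    .of_dist_nearest_le hXcl hXne fun y hy ↦ hAlg y hy.1 hy.2
  have hx : x ∈ trappingRegion Xs xbar φ₁ φ₂ ρ (1 + ρ) :=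
    mem_trappingRegion_of_dist_lt (by positivity) hxbar hx1 hx2
  have hxball : x ∈ ball xbar φ₁ := (trappingRegion_subset hρ1 (by positivity) hx).1
  have hz_iterate (i : ℕ) : z i = Alg^[i] x := by
    induction i with
    | zero => exact hz0
    | succ i ih => rw [hz, ih, Function.iterate_succ_apply']
  refine ⟨_, le_rfl, ?_⟩
  rw [hz_iterate]
  exact fallback_halves_gap_general hA hρ0.le hρ1 (by positivity) hxbar hfX hμ (hsharp x hxball)
    (hμ.trans_le hLμ) (.of_dist_le_mul hLip) hx two_pos (Nat.le_ceil _)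
end

section
/- Chain rule for (b)-regularity (Theorem 3.4 of the paper): Let E₁, E₂, E₃ be finite-dimensional real inner-product spaces, let F₁ : E₁ → E₂ and F₂ : E₂ → E₃ be maps with F₁ Lipschitz on a neighborhood of x̄, and let G₁ : E₁ → Set (E₁ →L[ℝ] E₂) and G₂ : E₂ → Set (E₂ →L[ℝ] E₃) be set-valued maps such that the operator norms of the elements of G₂(z) are bounded above uniformly for z in a neighborhood of F₁(x̄). Fix Y₂ ⊆ E₂, set Y₁ = F₁⁻¹(Y₂), and let x̄ ∈ Y₁. Suppose (F₁, G₁) is (b)-regular along Y₁ at x̄ with exponent 1+η₁ and (F₂, G₂) is (b)-regular along Y₂ at F₁(x̄) with exponent 1+η₂. Define G(x) = {A₂ ∘ A₁ : A₁ ∈ G₁(x), A₂ ∈ G₂(F₁(x))}. Then (F₂ ∘ F₁, G) is (b)-regular along Y₁ at x̄ with exponent 1 + min{η₁, η₂}. -/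
open Metric

/-- `(F, G)` is `(b)`-regular along `Y` at `xbar` with exponent `1 + η`: there are
`C > 0` and `ε > 0` such that `‖F y - F x - A (y - x)‖ ≤ C ‖x - y‖^(1+η)` for all `x`
in the open ball `B_ε(xbar)`, all `A ∈ G x`, and all `y ∈ Y ∩ B_ε(xbar)`. -/
def BRegular {E E' : Type*} [NormedAddCommGroup E] [InnerProductSpace ℝ E]
    [NormedAddCommGroup E'] [InnerProductSpace ℝ E']
    (F : E → E') (G : E → Set (E →L[ℝ] E')) (Y : Set E) (xbar : E) (η : ℝ) : Prop :=
  ∃ C > (0 : ℝ), ∃ ε > (0 : ℝ), ∀ x ∈ ball xbar ε, ∀ A ∈ G x, ∀ y ∈ Y ∩ ball xbar ε,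
    ‖F y - F x - A (y - x)‖ ≤ C * ‖x - y‖ ^ (1 + η)

/-!
Call `F y - F x - A (y - x)` the remainder of `F` between `x` and `y`. The remainder of `F₂ ∘ F₁`
is that of `F₂` between `F₁ x` and `F₁ y`, plus `A₂` applied to that of `F₁` between `x` and `y`.
The Lipschitz bound on `F₁` turns `‖F₁ x - F₁ y‖ ^ r` into `K ^ r * ‖x - y‖ ^ r` in the first term,
and the bound on `‖A₂‖` controls the second. Since `‖x - y‖ ≤ 1` near the base point, both
exponents may be lowered to their minimum beforehand.
-/

open scoped Topology NNReal

section

variable {𝕜 E₁ E₂ E₃ : Type*} [NontriviallyNormedField 𝕜]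
  [SeminormedAddCommGroup E₁] [NormedSpace 𝕜 E₁]
  [SeminormedAddCommGroup E₂] [NormedSpace 𝕜 E₂]
  [SeminormedAddCommGroup E₃] [NormedSpace 𝕜 E₃]

/-- `(b)`-regularity of `(F, G)` along `Y` at `a`, in filter form, over any nontrivially normed
field. The parameter `r` is the whole exponent, written `1 + η` in `BRegular`, and `C = 0` is
allowed. -/
def BRegularAt (F : E₁ → E₂) (G : E₁ → Set (E₁ →L[𝕜] E₂)) (Y : Set E₁) (a : E₁) (r : ℝ) : Prop :=
  ∃ C : ℝ≥0, ∀ᶠ p : E₁ × E₁ in 𝓝 (a, a), p.2 ∈ Y → ∀ A ∈ G p.1,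
    ‖F p.2 - F p.1 - A (p.2 - p.1)‖ ≤ C * ‖p.1 - p.2‖ ^ r

theorem eventually_norm_fst_sub_snd_le (a : E₁) {δ : ℝ} (hδ : 0 < δ) :
    ∀ᶠ p : E₁ × E₁ in 𝓝 (a, a), ‖p.1 - p.2‖ ≤ δ := by
  have hcont : Continuous fun p : E₁ × E₁ => ‖p.1 - p.2‖ := by fun_prop
  exact hcont.continuousAt.eventually_le_const (by simpa using hδ)

theorem norm_comp_sub_comp_sub_le (F₁ : E₁ → E₂) (F₂ : E₂ → E₃)
    (A₁ : E₁ →L[𝕜] E₂) (A₂ : E₂ →L[𝕜] E₃) (x y : E₁) :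
    ‖F₂ (F₁ y) - F₂ (F₁ x) - A₂.comp A₁ (y - x)‖ ≤
      ‖F₂ (F₁ y) - F₂ (F₁ x) - A₂ (F₁ y - F₁ x)‖ + ‖A₂‖ * ‖F₁ y - F₁ x - A₁ (y - x)‖ := by
  calc ‖F₂ (F₁ y) - F₂ (F₁ x) - A₂.comp A₁ (y - x)‖
      = ‖(F₂ (F₁ y) - F₂ (F₁ x) - A₂ (F₁ y - F₁ x)) + A₂ (F₁ y - F₁ x - A₁ (y - x))‖ := by
        rw [ContinuousLinearMap.comp_apply, map_sub A₂ (F₁ y - F₁ x), sub_add_sub_cancel]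
    _ ≤ ‖F₂ (F₁ y) - F₂ (F₁ x) - A₂ (F₁ y - F₁ x)‖ + ‖A₂ (F₁ y - F₁ x - A₁ (y - x))‖ :=
        norm_add_le _ _
    _ ≤ _ := by gcongr; exact A₂.le_opNorm _

theorem BRegularAt.mono_exponent {F : E₁ → E₂} {G : E₁ → Set (E₁ →L[𝕜] E₂)} {Y : Set E₁}
    {a : E₁} {r s : ℝ} (h : BRegularAt F G Y a r) (hs : 0 ≤ s) (hsr : s ≤ r) :
    BRegularAt F G Y a s := by
  obtain ⟨C, hC⟩ := h
  refine ⟨C, ?_⟩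
  filter_upwards [hC, eventually_norm_fst_sub_snd_le a one_pos] with p hp hp_one hpY A hA
  calc ‖F p.2 - F p.1 - A (p.2 - p.1)‖ ≤ C * ‖p.1 - p.2‖ ^ r := hp hpY A hA
    _ ≤ C * ‖p.1 - p.2‖ ^ s := by
      refine mul_le_mul_of_nonneg_left ?_ C.coe_nonneg
      exact Real.rpow_le_rpow_of_exponent_ge_of_imp (norm_nonneg _) hp_one hsr
        fun _ hr_zero => le_antisymm (hsr.trans_eq hr_zero) hs

variable {F₁ : E₁ → E₂} {F₂ : E₂ → E₃} {G₁ : E₁ → Set (E₁ →L[𝕜] E₂)}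
  {G₂ : E₂ → Set (E₂ →L[𝕜] E₃)} {Y₁ : Set E₁} {Y₂ : Set E₂} {a : E₁}

theorem BRegularAt.comp {r : ℝ} (h₂ : BRegularAt F₂ G₂ Y₂ (F₁ a) r)
    (h₁ : BRegularAt F₁ G₁ Y₁ a r) (hr : 0 ≤ r)
    (hLip : ∃ K : ℝ≥0, ∃ s ∈ 𝓝 a, LipschitzOnWith K F₁ s)
    (hbdd : ∃ M : ℝ, ∀ᶠ z in 𝓝 (F₁ a), ∀ A ∈ G₂ z, ‖A‖ ≤ M) (hY : Set.MapsTo F₁ Y₁ Y₂) :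
    BRegularAt (F₂ ∘ F₁) (fun x => {C | ∃ A₁ ∈ G₁ x, ∃ A₂ ∈ G₂ (F₁ x), C = A₂.comp A₁})
      Y₁ a r := by
  obtain ⟨K, s, hs, hK⟩ := hLip
  obtain ⟨M, hM⟩ := hbdd
  obtain ⟨C₁, hC₁⟩ := h₁
  obtain ⟨C₂, hC₂⟩ := h₂
  have hF₁ : ContinuousAt F₁ a := hK.continuousOn.continuousAt hs
  refine ⟨C₂ * K ^ r + M.toNNReal * C₁, ?_⟩
  filter_upwards [hC₁, (hF₁.prodMap hF₁).eventually hC₂,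
    continuousAt_fst.eventually (hF₁.eventually hM), prod_mem_nhds hs hs]
  rintro ⟨x, y⟩ hrem₁ hrem₂ hnorm ⟨hx, hy⟩ hyY _ ⟨A₁, hA₁, A₂, hA₂, rfl⟩
  have hdist : ‖F₁ x - F₁ y‖ ^ r ≤ K ^ r * ‖x - y‖ ^ r := by
    rw [← Real.mul_rpow K.coe_nonneg (norm_nonneg _)]
    exact Real.rpow_le_rpow (norm_nonneg _) (hK.norm_sub_le hx hy) hr
  calc ‖F₂ (F₁ y) - F₂ (F₁ x) - A₂.comp A₁ (y - x)‖
      ≤ ‖F₂ (F₁ y) - F₂ (F₁ x) - A₂ (F₁ y - F₁ x)‖ + ‖A₂‖ * ‖F₁ y - F₁ x - A₁ (y - x)‖ :=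
        norm_comp_sub_comp_sub_le F₁ F₂ A₁ A₂ x y
    _ ≤ C₂ * ‖F₁ x - F₁ y‖ ^ r + M.toNNReal * (C₁ * ‖x - y‖ ^ r) := by
        gcongr
        · exact hrem₂ (hY hyY) A₂ hA₂
        · exact (hnorm A₂ hA₂).trans (Real.le_coe_toNNReal M)
        · exact hrem₁ hyY A₁ hA₁
    _ ≤ C₂ * (K ^ r * ‖x - y‖ ^ r) + M.toNNReal * (C₁ * ‖x - y‖ ^ r) := by gcongr
    _ = ↑(C₂ * K ^ r + M.toNNReal * C₁) * ‖x - y‖ ^ r := by push_cast; ring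

theorem bregular_chain_rule_general {r₁ r₂ : ℝ} (hr₁ : 0 ≤ r₁) (hr₂ : 0 ≤ r₂)
    (hLip : ∃ K : ℝ≥0, ∃ s ∈ 𝓝 a, LipschitzOnWith K F₁ s)
    (hbdd : ∃ M : ℝ, ∀ᶠ z in 𝓝 (F₁ a), ∀ A ∈ G₂ z, ‖A‖ ≤ M) (hY : Set.MapsTo F₁ Y₁ Y₂)
    (h₁ : BRegularAt F₁ G₁ Y₁ a r₁) (h₂ : BRegularAt F₂ G₂ Y₂ (F₁ a) r₂) :
    BRegularAt (F₂ ∘ F₁) (fun x => {C | ∃ A₁ ∈ G₁ x, ∃ A₂ ∈ G₂ (F₁ x), C = A₂.comp A₁})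
      Y₁ a (min r₁ r₂) :=
  have hr : 0 ≤ min r₁ r₂ := le_min hr₁ hr₂
  (h₂.mono_exponent hr (min_le_right r₁ r₂)).comp (h₁.mono_exponent hr (min_le_left r₁ r₂))
    hr hLip hbdd hY

end

theorem bregular_iff_bregularAt {E E' : Type*} [NormedAddCommGroup E] [InnerProductSpace ℝ E]
    [NormedAddCommGroup E'] [InnerProductSpace ℝ E'] {F : E → E'} {G : E → Set (E →L[ℝ] E')}
    {Y : Set E} {a : E} {η : ℝ} :
    BRegular F G Y a η ↔ BRegularAt F G Y a (1 + η) := by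
  simp only [BRegular, BRegularAt, eventually_nhds_iff_ball]
  constructor
  · rintro ⟨C, hC, ε, hε, h⟩
    refine ⟨⟨C, hC.le⟩, ε, hε, fun p hp hpY A hA => ?_⟩
    rw [← ball_prod_same] at hp
    exact h p.1 hp.1 A hA p.2 ⟨hpY, hp.2⟩
  · rintro ⟨C, ε, hε, h⟩
    refine ⟨C + 1, by positivity, ε, hε, fun x hx A hA y hy => ?_⟩
    have hxy : (x, y) ∈ ball (a, a) ε := ball_prod_same a a ε ▸ ⟨hx, hy.2⟩
    refine (h (x, y) hxy hy.1 A hA).trans ?_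
    gcongr
    exact le_add_of_nonneg_right zero_le_one

/-- **Chain rule for (b)-regularity** (Theorem 3.4). -/
theorem bregular_chain_rule
    {E₁ E₂ E₃ : Type*}
    [NormedAddCommGroup E₁] [InnerProductSpace ℝ E₁] [FiniteDimensional ℝ E₁]
    [NormedAddCommGroup E₂] [InnerProductSpace ℝ E₂] [FiniteDimensional ℝ E₂]
    [NormedAddCommGroup E₃] [InnerProductSpace ℝ E₃] [FiniteDimensional ℝ E₃]
    (F₁ : E₁ → E₂) (F₂ : E₂ → E₃)
    (G₁ : E₁ → Set (E₁ →L[ℝ] E₂)) (G₂ : E₂ → Set (E₂ →L[ℝ] E₃))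
    (Y₂ : Set E₂) (xbar : E₁) (hxbar : xbar ∈ F₁ ⁻¹' Y₂)
    (η₁ η₂ : ℝ) (hη₁ : 0 < η₁) (hη₂ : 0 < η₂)
    (hLip : ∃ ε > (0 : ℝ), ∃ K : NNReal, LipschitzOnWith K F₁ (ball xbar ε))
    (hbdd : ∃ ε > (0 : ℝ), ∃ M : ℝ, ∀ z ∈ ball (F₁ xbar) ε, ∀ A ∈ G₂ z, ‖A‖ ≤ M)
    (h₁ : BRegular F₁ G₁ (F₁ ⁻¹' Y₂) xbar η₁)
    (h₂ : BRegular F₂ G₂ Y₂ (F₁ xbar) η₂) :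
    BRegular (F₂ ∘ F₁)
      (fun x => {C : E₁ →L[ℝ] E₃ | ∃ A₁ ∈ G₁ x, ∃ A₂ ∈ G₂ (F₁ x), C = A₂.comp A₁})
      (F₁ ⁻¹' Y₂) xbar (min η₁ η₂) := by
  obtain ⟨ε, hε, K, hK⟩ := hLip
  obtain ⟨δ, hδ, M, hM⟩ := hbdd
  rw [bregular_iff_bregularAt] at h₁ h₂ ⊢
  rw [← min_add_add_left]
  exact bregular_chain_rule_general (by linarith) (by linarith)
    ⟨K, ball xbar ε, ball_mem_nhds xbar hε, hK⟩
    ⟨M, eventually_nhds_iff_ball.2 ⟨δ, hδ, hM⟩⟩ (Set.mapsTo_preimage F₁ Y₂) h₁ h₂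
end

section
/- Sum rule for (b)-regularity (Corollary 3.5 of the paper): Let E and E' be finite-dimensional real inner-product spaces and let I be a finite index set. For each i ∈ I let F_i : E → E' be a map, G_i : E → Set (E →L[ℝ] E') a set-valued map, Y_i ⊆ E a set, and η_i > 0, and suppose x̄ ∈ Y := ⋂_{i∈I} Y_i and each (F_i, G_i) is (b)-regular along Y_i at x̄ with exponent 1+η_i. Define F = ∑_{i∈I} F_i and G(x) = {∑_{i∈I} A_i : A_i ∈ G_i(x) for each i ∈ I}. Then (F, G) is (b)-regular along Y at x̄ with exponent 1 + min_{i∈I} η_i. -/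
open Metric

/-!
Regularity only concerns pairs `(x, y)` close to `(xbar, xbar)`, where `‖x - y‖ ≤ 1` and a power of
`‖x - y‖` grows as its exponent decreases. All the `F i` are thus regular with the smallest of the
exponents, and the remainder of the sum is the sum of their remainders.
-/

section BRegularity

open Filter Topology
open scoped Pointwise

variable {E E' : Type*}
  [NormedAddCommGroup E] [InnerProductSpace ℝ E]
  [NormedAddCommGroup E'] [InnerProductSpace ℝ E']

theorem bregular_iff_eventually {F : E → E'} {G : E → Set (E →L[ℝ] E')} {Y : Set E}
    {xbar : E} {η : ℝ} :
    BRegular F G Y xbar η ↔ ∃ C : ℝ, ∀ᶠ p in 𝓝 xbar ×ˢ 𝓝[Y] xbar, ∀ A ∈ G p.1,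
      ‖F p.2 - F p.1 - A (p.2 - p.1)‖ ≤ C * ‖p.1 - p.2‖ ^ (1 + η) := by
  have basis : (𝓝 xbar ×ˢ 𝓝[Y] xbar).HasBasis (fun ε : ℝ => 0 < ε)
      (fun ε => ball xbar ε ×ˢ (ball xbar ε ∩ Y)) :=
    nhds_basis_ball.prod_same_index_mono nhdsWithin_basis_ball
      (fun _ _ _ _ hle => ball_subset_ball hle)
      (fun _ _ _ _ hle => Set.inter_subset_inter_left Y (ball_subset_ball hle))
  constructor
  · rintro ⟨C, -, ε, hε, hreg⟩
    exact ⟨C, basis.eventually_iff.2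
      ⟨ε, hε, fun p hp A hA => hreg p.1 hp.1 A hA p.2 hp.2.symm⟩⟩
  · rintro ⟨C, hC⟩
    obtain ⟨ε, hε, hreg⟩ := basis.eventually_iff.1 hC
    refine ⟨max C 1, by positivity, ε, hε, fun x hx A hA y hy => ?_⟩
    calc ‖F y - F x - A (y - x)‖
        ≤ C * ‖x - y‖ ^ (1 + η) := hreg (x := (x, y)) ⟨hx, hy.symm⟩ A hA
      _ ≤ max C 1 * ‖x - y‖ ^ (1 + η) := by gcongr; exact le_max_left C 1

namespace BRegular

theorem mono_set {F : E → E'} {G : E → Set (E →L[ℝ] E')} {Y Z : Set E} {xbar : E} {η : ℝ}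
    (h : BRegular F G Z xbar η) (hYZ : Y ⊆ Z) : BRegular F G Y xbar η := by
  obtain ⟨C, hC, ε, hε, hreg⟩ := h
  exact ⟨C, hC, ε, hε, fun x hx A hA y hy => hreg x hx A hA y ⟨hYZ hy.1, hy.2⟩⟩

theorem mono_exponent {F : E → E'} {G : E → Set (E →L[ℝ] E')} {Y : Set E} {xbar : E} {η θ : ℝ}
    (h : BRegular F G Y xbar η) (hθη : θ ≤ η) : BRegular F G Y xbar θ := by
  obtain ⟨C, hC, ε, hε, hreg⟩ := h
  refine ⟨C, hC, min ε (1 / 2), by positivity, fun x hx A hA y ⟨hyY, hy⟩ => ?_⟩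
  rw [mem_ball, lt_min_iff] at hx hy
  have hxy : ‖x - y‖ ≤ 1 := by
    rw [← dist_eq_norm]
    linarith [dist_triangle_right x y xbar, hx.2, hy.2]
  rcases eq_or_ne x y with rfl | hne
  · -- Here the remainder vanishes, whereas `0 ^ (1 + η) ≤ 0 ^ (1 + θ)` fails for `θ < η = -1`.
    simp only [sub_self, map_zero, norm_zero]
    positivity
  · have hpos : 0 < ‖x - y‖ := norm_sub_pos_iff.2 hne
    calc ‖F y - F x - A (y - x)‖
        ≤ C * ‖x - y‖ ^ (1 + η) := hreg x hx.1 A hA y ⟨hyY, hy.1⟩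
      _ ≤ C * ‖x - y‖ ^ (1 + θ) := by
        gcongr ?_ * ?_
        exact Real.rpow_le_rpow_of_exponent_ge hpos hxy (by gcongr)

theorem sum {I : Type*} {s : Finset I} {F : I → E → E'} {G : I → E → Set (E →L[ℝ] E')}
    {Y : Set E} {xbar : E} {η : ℝ} (h : ∀ i ∈ s, BRegular (F i) (G i) Y xbar η) :
    BRegular (fun x => ∑ i ∈ s, F i x) (fun x => ∑ i ∈ s, G i x) Y xbar η := by
  simp only [bregular_iff_eventually] at h ⊢
  choose! C hC using h
  refine ⟨∑ i ∈ s, C i, ?_⟩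
  filter_upwards [(eventually_all_finset s).2 hC] with ⟨x, y⟩ hreg A hA
  obtain ⟨a, ha, rfl⟩ := (Set.mem_finsetSum ..).1 hA
  calc ‖∑ i ∈ s, F i y - ∑ i ∈ s, F i x - (∑ i ∈ s, a i) (y - x)‖
      = ‖∑ i ∈ s, (F i y - F i x - a i (y - x))‖ := by
        simp only [Finset.sum_sub_distrib, sum_apply]
    _ ≤ ∑ i ∈ s, C i * ‖x - y‖ ^ (1 + η) :=
        norm_sum_le_of_le s fun i hi => hreg i hi (a i) (ha hi)
    _ = (∑ i ∈ s, C i) * ‖x - y‖ ^ (1 + η) := (Finset.sum_mul ..).symm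

end BRegular

theorem bregular_sum_rule_general {I : Type*} [Fintype I]
    (F : I → E → E') (G : I → E → Set (E →L[ℝ] E')) (Y : I → Set E)
    (η : I → ℝ) {θ : ℝ} (hθ : ∀ i, θ ≤ η i) (xbar : E)
    (h : ∀ i, BRegular (F i) (G i) (Y i) xbar (η i)) :
    BRegular (fun x => ∑ i, F i x)
      (fun x => {A : E →L[ℝ] E' |
        ∃ a : I → (E →L[ℝ] E'), (∀ i, a i ∈ G i x) ∧ A = ∑ i, a i})
      (⋂ i, Y i) xbar θ := by
  have hG (x : E) : ∑ i, G i x = {A : E →L[ℝ] E' |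
      ∃ a : I → (E →L[ℝ] E'), (∀ i, a i ∈ G i x) ∧ A = ∑ i, a i} := by
    ext A
    simp only [Set.mem_fintype_sum, exists_prop, Set.mem_ofPred_eq, eq_comm]
  simp only [← hG]
  exact BRegular.sum fun i _ =>
    ((h i).mono_set (Set.iInter_subset Y i)).mono_exponent (hθ i)

end BRegularity

/-- **Sum rule for (b)-regularity** (Corollary 3.5). -/
theorem bregular_sum_rule
    {E E' : Type*}
    [NormedAddCommGroup E] [InnerProductSpace ℝ E] [FiniteDimensional ℝ E]
    [NormedAddCommGroup E'] [InnerProductSpace ℝ E'] [FiniteDimensional ℝ E']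
    {I : Type*} [Fintype I] [Nonempty I]
    (F : I → E → E') (G : I → E → Set (E →L[ℝ] E')) (Y : I → Set E)
    (η : I → ℝ) (hη : ∀ i, 0 < η i)
    (xbar : E) (hxbar : xbar ∈ ⋂ i, Y i)
    (h : ∀ i, BRegular (F i) (G i) (Y i) xbar (η i)) :
    BRegular (fun x => ∑ i, F i x)
      (fun x => {A : E →L[ℝ] E' |
        ∃ a : I → (E →L[ℝ] E'), (∀ i, a i ∈ G i x) ∧ A = ∑ i, a i})
      (⋂ i, Y i) xbar (⨅ i, η i) :=
  bregular_sum_rule_general F G Y η (ciInf_le (Set.finite_range η).bddBelow) xbar h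
end

section
/- (b)-regularity of the distance function from a proximal-normal estimate (the key step in the proof of Lemma 3.3 of the paper): Let E be a finite-dimensional real inner-product space, X ⊆ E a closed set, Y ⊆ X, x̄ ∈ Y, and let C > 0, 0 < η ≤ 1, and δ > 0 be such that |⟨z − ẑ, y − ẑ⟩| ≤ C·‖z − ẑ‖·‖y − ẑ‖^(1+η) for every z in the open ball B_δ(x̄) with z ∉ X, every nearest point ẑ of X to z, and every y ∈ Y ∩ B_δ(x̄). Then for every such z, ẑ, and y, writing v_z = (z − ẑ)/‖z − ẑ‖, one has |dist(z, X) + ⟨v_z, y − z⟩| ≤ 4C·‖y − z‖^(1+η). -/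
open Metric
open scoped RealInnerProductSpace

/-!
Put `v = ‖z - w‖⁻¹ • (z - w)` for a nearest point `w` of `z`. As `⟪v, z - w⟫ = infDist z X`, the
first-order expression `infDist z X + ⟪v, y - z⟫` is exactly `⟪v, y - w⟫`, which the
proximal-normal estimate bounds by `C * ‖y - w‖ ^ (1 + η)`. No point `y` of `X` is closer to `z`
than `w`, so recentring from `w` to `z` costs a factor `2` in the norm, hence at most
`2 ^ (1 + η) ≤ 4` in the estimate.
-/

lemma dist_le_two_mul_dist_of_dist_eq_infDist {α : Type*} [PseudoMetricSpace α] {X : Set α}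
    {w y z : α} (hw : dist z w = infDist z X) (hy : y ∈ X) :
    dist y w ≤ 2 * dist y z :=
  calc dist y w ≤ dist y z + dist z w := dist_triangle y z w
    _ ≤ dist y z + dist z y := by grw [hw, infDist_le_dist_of_mem hy]
    _ = 2 * dist y z := by rw [dist_comm z y, two_mul]

lemma two_rpow_one_add_le_four {η : ℝ} (hη : η ≤ 1) : (2 : ℝ) ^ (1 + η) ≤ 4 :=
  calc (2 : ℝ) ^ (1 + η) ≤ 2 ^ (2 : ℝ) :=
        Real.rpow_le_rpow_of_exponent_le one_le_two (by linarith)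
    _ = 4 := by norm_num

section InnerProductSpace

variable {E : Type*} [SeminormedAddCommGroup E] [InnerProductSpace ℝ E]

lemma real_inner_inv_norm_smul_self (u : E) : ⟪‖u‖⁻¹ • u, u⟫ = ‖u‖ := by
  rw [real_inner_smul_left, real_inner_self_eq_norm_mul_norm, ← mul_assoc, inv_mul_mul_self]

lemma norm_sub_add_inner_inv_norm_smul_sub (w y z : E) :
    ‖z - w‖ + ⟪‖z - w‖⁻¹ • (z - w), y - z⟫ = ⟪‖z - w‖⁻¹ • (z - w), y - w⟫ := by
  rw [← sub_add_sub_cancel' z w y, inner_add_right, real_inner_inv_norm_smul_self]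

lemma abs_inner_inv_norm_smul_le {u x : E} {b : ℝ} (hu : 0 < ‖u‖) (h : |⟪u, x⟫| ≤ ‖u‖ * b) :
    |⟪‖u‖⁻¹ • u, x⟫| ≤ b := by
  rwa [real_inner_smul_left, abs_mul, abs_inv, abs_norm, inv_mul_le_iff₀ hu]

end InnerProductSpace

theorem bregular_distance_function_general
    {E : Type*} [NormedAddCommGroup E] [InnerProductSpace ℝ E] {X : Set E} {w y z : E} {C p : ℝ}
    (hC : 0 ≤ C) (hp : 0 ≤ p) (hz : z ∉ X) (hw : w ∈ X) (hzw : dist z w = infDist z X)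
    (hy : y ∈ X) (h : |⟪z - w, y - w⟫| ≤ C * ‖z - w‖ * ‖y - w‖ ^ p) :
    |infDist z X + ⟪‖z - w‖⁻¹ • (z - w), y - z⟫| ≤ 2 ^ p * C * ‖y - z‖ ^ p := by
  have hpos : 0 < ‖z - w‖ := norm_sub_pos_iff.mpr (ne_of_mem_of_not_mem hw hz).symm
  have hnorm : ‖y - w‖ ≤ 2 * ‖y - z‖ := by
    simpa only [dist_eq_norm] using dist_le_two_mul_dist_of_dist_eq_infDist hzw hy
  calc |infDist z X + ⟪‖z - w‖⁻¹ • (z - w), y - z⟫|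
      = |⟪‖z - w‖⁻¹ • (z - w), y - w⟫| := by
        rw [← hzw, dist_eq_norm, norm_sub_add_inner_inv_norm_smul_sub]
    _ ≤ C * ‖y - w‖ ^ p := abs_inner_inv_norm_smul_le hpos (h.trans_eq (by ring))
    _ ≤ C * (2 * ‖y - z‖) ^ p := by gcongr
    _ = 2 ^ p * C * ‖y - z‖ ^ p := by
        rw [Real.mul_rpow zero_le_two (norm_nonneg _)]
        ring

/-- **(b)-regularity of the distance function from a proximal-normal estimate**
(key step in the proof of Lemma 3.3). -/
theorem bregular_distance_function
    {E : Type*} [NormedAddCommGroup E] [InnerProductSpace ℝ E] [FiniteDimensional ℝ E]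
    (X Y : Set E) (hXcl : IsClosed X) (hYX : Y ⊆ X) (xbar : E) (hxbar : xbar ∈ Y)
    (C η δ : ℝ) (hC : 0 < C) (hη0 : 0 < η) (hη1 : η ≤ 1) (hδ : 0 < δ)
    (hkey : ∀ z ∈ ball xbar δ, z ∉ X → ∀ zh ∈ X, dist z zh = infDist z X →
      ∀ y ∈ Y ∩ ball xbar δ, |⟪z - zh, y - zh⟫| ≤ C * ‖z - zh‖ * ‖y - zh‖ ^ (1 + η)) :
    ∀ z ∈ ball xbar δ, z ∉ X → ∀ zh ∈ X, dist z zh = infDist z X →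
      ∀ y ∈ Y ∩ ball xbar δ,
        |infDist z X + ⟪‖z - zh‖⁻¹ • (z - zh), y - z⟫| ≤ 4 * C * ‖y - z‖ ^ (1 + η) := by
  intro z hz hzX zh hzh hd y hy
  grw [bregular_distance_function_general hC.le (by positivity) hzX hzh hd (hYX hy.1)
    (hkey z hz hzX zh hzh hd y hy), two_rpow_one_add_le_four hη1]
end
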